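/- Let the base set be ℕ (with its usual order, used to define T1 and T2). Then: (1) the set T2 of binary never 1-1 operations is closed under composition, i.e., whenever f, g, h ∈ T2, the operation (x,y) ↦ f(g(x,y), h(x,y)) is in T2; (2) the set of all never 1-1 operations (of all arities) is a clone and equals Pol(T2); (3) Pol(T2) is a precomplete clone; (4) every precomplete clone on ℕ containing all unary operations equals Pol(T1) or Pol(T2). -/

import Mathlib

universe u v

open Cardinal

/-- The set of all finitary operations on `X`: an `n`-th component element is an
operation of arity `n + 1` (so all arities are `≥ 1`). -/
abbrev Ops (X : Type u) : Type u := Σ n : ℕ, ((Fin (n + 1) → X) → X)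

/-- A clone: contains all projections and is closed under composition. -/
def IsClone {X : Type u} (C : Set (Ops X)) : Prop :=
  (∀ (n : ℕ) (k : Fin (n + 1)), (⟨n, fun x => x k⟩ : Ops X) ∈ C) ∧
  ∀ (n m : ℕ) (f : (Fin (n + 1) → X) → X), (⟨n, f⟩ : Ops X) ∈ C →
    ∀ g : Fin (n + 1) → ((Fin (m + 1) → X) → X), (∀ i, (⟨m, g i⟩ : Ops X) ∈ C) →
      (⟨m, fun x => f fun i => g i x⟩ : Ops X) ∈ C

/-- The clone generated by a set of operations. -/
def cloneGen {X : Type u} (F : Set (Ops X)) : Set (Ops X) :=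
  ⋂₀ {C : Set (Ops X) | IsClone C ∧ F ⊆ C}

/-- A precomplete (maximal) clone. -/
def IsPrecompleteClone {X : Type u} (C : Set (Ops X)) : Prop :=
  IsClone C ∧ C ≠ Set.univ ∧ ∀ f : Ops X, f ∉ C → cloneGen (insert f C) = Set.univ

/-- A unary function, viewed as a unary operation in `Ops X`. -/
def unaryOp {X : Type u} (F : X → X) : Ops X := ⟨0, fun x => F (x 0)⟩

/-- The polymorphism clone of a set of binary operations. -/
def Pol2 {X : Type u} (H : Set (X → X → X)) : Set (Ops X) :=
  {f : Ops X | ∀ g : Fin (f.1 + 1) → (X → X → X), (∀ i, g i ∈ H) →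
    (fun x y => f.2 fun i => g i x y) ∈ H}

/-- A binary operation is essentially unary iff it depends on at most one variable. -/
def EssUnary2 (u : ℕ → ℕ → ℕ) : Prop :=
  (∃ U : ℕ → ℕ, ∀ x y, u x y = U x) ∨ (∃ U : ℕ → ℕ, ∀ x y, u x y = U y)

/-- The set `∇` of points above the diagonal. -/
def Nabla : Set (ℕ × ℕ) := {p | p.1 < p.2}

/-- The set `T2` of binary never 1-1 operations on `ℕ`. -/
def T2bin : Set (ℕ → ℕ → ℕ) :=
  {f | ∀ u v : ℕ → ℕ → ℕ, EssUnary2 u → EssUnary2 v →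
    ¬ Set.InjOn (fun p : ℕ × ℕ => f (u p.1 p.2) (v p.1 p.2)) Nabla}

/-- An operation of any arity is never 1-1 iff all its substitutions by essentially unary
binary operations are non-injective on `∇`. -/
def NeverOneOneOp (f : Ops ℕ) : Prop :=
  ∀ u : Fin (f.1 + 1) → (ℕ → ℕ → ℕ), (∀ i, EssUnary2 (u i)) →
    ¬ Set.InjOn (fun p : ℕ × ℕ => f.2 fun i => u i p.1 p.2) Nabla

/-- The binary almost unary operations on `ℕ`. -/
def T1bin : Set (ℕ → ℕ → ℕ) :=
  {f | (∃ F : ℕ → ℕ, ∀ x y, f x y ≤ F x) ∨ (∃ F : ℕ → ℕ, ∀ x y, f x y ≤ F y)}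

/-!
By Ramsey's theorem every binary function on `ℕ` is, along some strictly increasing sequence,
canonical: the relative order of four arguments decides the equality of two values. A canonical
function is on `∇` either injective or essentially unary, and this turns compositions of never 1-1
operations back into essentially unary substitutions, so that they form the clone `Pol(T2)`. Adding
an operation injective on `∇` to `max`, `min` and the indicator of `<`, all of which lie in `T2`,
yields an injective binary operation, and together with the unary operations that generates
everything.

Let now `C` be a clone containing the unary operations but not contained in `Pol(T2)`. It contains a
canonical `g` that is injective on `∇`. Either `g` is symmetric and `C` contains an injective binary
operation, or `g` takes disjoint sets of values above and below the diagonal. In the latter case `C`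
contains a pairing function for the pairs `x ≤ y`, hence all of `T1`. If moreover `C` is not
contained in `Pol(T1)`, it contains an operation dominating both of its arguments, and pairing them
with that upper bound is injective.
-/

open Filter Set

section Ramsey

theorem exists_strictMono_forall_image_range {R : Finset ℕ → ℕ → Prop}
    (anti : ∀ y s t, s ⊆ t → R t y → R s y) (h : ∀ s, ∃ᶠ y in atTop, R s y) :
    ∃ e : ℕ → ℕ, StrictMono e ∧ ∀ n, R ((Finset.range n).image e) (e n) := by
  classical
  obtain ⟨f, hf, hmem⟩ := exists_seq_of_forall_finset_exists
    (fun p : Finset ℕ × ℕ => R p.1 p.2 ∧ ∀ x ∈ p.1, x < p.2) (fun p q => p.2 ∈ q.1) fun T _ => by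
      obtain ⟨y, hlt, hy⟩ := frequently_atTop'.1 (h (T.image Prod.snd)) ((T.image Prod.snd).sup id)
      exact ⟨(T.image Prod.snd, y), ⟨hy, fun x hx => (Finset.le_sup (f := id) hx).trans_lt hlt⟩,
        fun p hp => Finset.mem_image_of_mem _ hp⟩
  refine ⟨fun n => (f n).2, strictMono_nat_of_lt_succ fun n => (hf _).2 _ (hmem _ _ n.lt_succ_self),
    fun n => anti _ _ _ (fun x hx => ?_) (hf n).1⟩
  obtain ⟨m, hm, rfl⟩ := Finset.mem_image.1 hx
  exact hmem m n (Finset.mem_range.1 hm)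

variable {κ : Type*} [Finite κ]

theorem exists_strictMono_forall_eq_init {n : ℕ} (c : (Fin (n + 1) → ℕ) → κ) :
    ∃ e : ℕ → ℕ, StrictMono e ∧ ∃ d : (Fin n → ℕ) → κ,
      ∀ t : Fin (n + 1) → ℕ, StrictMono t → c (e ∘ t) = d (e ∘ Fin.init t) := by
  -- The limit colour of a tuple is the one it gets from almost every new last entry.
  have hlim : ∀ x : Fin n → ℕ, ∃ k, ∀ᶠ y in (hyperfilter ℕ : Filter ℕ),
      c (Fin.snoc (α := fun _ => ℕ) x y) = k := fun x =>
    Ultrafilter.eventually_exists_iff.1 (Eventually.of_forall fun _ => ⟨_, rfl⟩)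
  choose d hd using hlim
  obtain ⟨e, he, hce⟩ := exists_strictMono_forall_image_range
    (R := fun s y => ∀ x ∈ Fintype.piFinset fun _ : Fin n => s,
      c (Fin.snoc (α := fun _ => ℕ) x y) = d x)
    (fun y s t hst h x hx => h x (Fintype.piFinset_subset _ _ (fun _ => hst) hx))
    (fun s => ((eventually_all_finset _).2 fun x _ => hd x).frequently.filter_mono
      Nat.hyperfilter_le_atTop)
  refine ⟨e, he, d, fun t ht => ?_⟩
  have hsnoc : e ∘ t = Fin.snoc (α := fun _ => ℕ) (e ∘ Fin.init t) (e (t (Fin.last n))) := by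
    rw [← Fin.comp_snoc, Fin.snoc_init_self]
  rw [hsnoc]
  exact hce _ _ (Fintype.mem_piFinset.2 fun i =>
    Finset.mem_image_of_mem e (Finset.mem_range.2 (ht i.castSucc_lt_last)))

theorem exists_strictMono_monochromatic {n : ℕ} (c : (Fin n → ℕ) → κ) :
    ∃ e : ℕ → ℕ, StrictMono e ∧ ∃ k, ∀ t : Fin n → ℕ, StrictMono t → c (e ∘ t) = k := by
  induction n with
  | zero => exact ⟨id, strictMono_id, c Fin.elim0, fun t _ => congrArg c (Subsingleton.elim _ _)⟩
  | succ n ih =>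
    obtain ⟨e₁, he₁, d, hd⟩ := exists_strictMono_forall_eq_init c
    obtain ⟨e₂, he₂, k, hk⟩ := ih fun x => d (e₁ ∘ x)
    refine ⟨e₁ ∘ e₂, he₁.comp he₂, k, fun t ht => ?_⟩
    exact (hd (e₂ ∘ t) (he₂.comp ht)).trans (hk (Fin.init t) (ht.comp Fin.strictMono_castSucc))

end Ramsey

section OrderInvariance

theorem exists_strictMono_apply_eq_add {ι : Type*} [Finite ι] {a b : ι → ℕ}
    (hab : ∀ i j, a i ≤ a j → b i ≤ b j) :
    ∃ x : ℕ → ℕ, StrictMono x ∧ ∀ i, x (a i) = a i + b i := by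
  cases nonempty_fintype ι
  refine ⟨fun m => m + (Finset.univ.filter (a · ≤ m)).sup b, fun m m' hm => ?_, fun i => ?_⟩
  · exact add_lt_add_of_lt_of_le hm (Finset.sup_mono fun j hj => by
      simp only [Finset.mem_filter] at hj ⊢; exact ⟨hj.1, hj.2.trans hm.le⟩)
  · exact congrArg (a i + ·) (le_antisymm
      (Finset.sup_le fun j hj => hab j i (Finset.mem_filter.1 hj).2)
      (Finset.le_sup (Finset.mem_filter.2 ⟨Finset.mem_univ i, le_rfl⟩)))

theorem exists_strictMono_comp_eq {α : Type*} [LinearOrder α] [Infinite α] {n : ℕ}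
    (a : Fin n → α) : ∃ t : Fin n → α, StrictMono t ∧ ∃ σ : Fin n → Fin n, a = t ∘ σ := by
  obtain ⟨T, haT, hT⟩ := Infinite.exists_superset_card_eq (Finset.univ.image a) n
    (Finset.card_image_le.trans_eq (Finset.card_fin n))
  have hσ : ∀ i, ∃ k, T.orderEmbOfFin hT k = a i := fun i => by
    rw [← Set.mem_range, Finset.range_orderEmbOfFin]
    exact haT (Finset.mem_image_of_mem a (Finset.mem_univ i))
  choose σ hσ using hσ
  exact ⟨T.orderEmbOfFin hT, (T.orderEmbOfFin hT).strictMono, σ, funext fun i => (hσ i).symm⟩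

theorem exists_strictMono_orderInvariant {ι : Type*} [Finite ι] {n : ℕ}
    (P : ι → (Fin n → ℕ) → Prop) :
    ∃ e : ℕ → ℕ, StrictMono e ∧ ∀ i (a b : Fin n → ℕ), (∀ j k, a j ≤ a k ↔ b j ≤ b k) →
      (P i (e ∘ a) ↔ P i (e ∘ b)) := by
  obtain ⟨e, he, Q, hQ⟩ := exists_strictMono_monochromatic
    fun t : Fin n → ℕ => fun (i : ι) (σ : Fin n → Fin n) => P i (t ∘ σ)
  have hcomp : ∀ (i : ι) (a : Fin n → ℕ) (x : ℕ → ℕ), StrictMono x →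
      (P i (e ∘ x ∘ a) ↔ P i (e ∘ a)) := fun i a x hx => by
    obtain ⟨t, ht, σ, rfl⟩ := exists_strictMono_comp_eq a
    have h := (hQ (x ∘ t) (hx.comp ht)).trans (hQ t ht).symm
    exact iff_of_eq (congrFun₂ h i σ)
  refine ⟨e, he, fun i a b hab => ?_⟩
  -- Tuples `a` and `b` of the same order type are both moved onto `a + b` by increasing maps.
  obtain ⟨x, hx, hxa⟩ := exists_strictMono_apply_eq_add fun j k => (hab j k).1
  obtain ⟨y, hy, hyb⟩ := exists_strictMono_apply_eq_add fun j k => (hab j k).2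
  have hxy : x ∘ a = y ∘ b := funext fun j => by
    simp only [Function.comp_apply, hxa, hyb, add_comm]
  rw [← hcomp i a x hx, hxy, hcomp i b y hy]

end OrderInvariance

theorem injOn_nabla_iff {α : Type*} {g : ℕ → ℕ → α} :
    InjOn (Function.uncurry g) Nabla ↔
      ∀ x y x' y', x < y → x' < y' → g x y = g x' y' → x = x' ∧ y = y' :=
  ⟨fun h x y x' y' hxy hxy' he => Prod.mk.inj (@h (x, y) hxy (x', y') hxy' he),
    fun h p hp q hq he => Prod.ext_iff.2 (h p.1 p.2 q.1 q.2 hp hq he)⟩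

/-- A binary function is canonical if the relative order of `x`, `y`, `x'`, `y'` decides whether
`c x y = c x' y'`. The four arguments are bundled into one tuple `Fin 4 → ℕ`. -/
def IsCanonical {α : Type*} (c : ℕ → ℕ → α) : Prop :=
  ∀ a b : Fin 4 → ℕ, (∀ i j, a i ≤ a j ↔ b i ≤ b j) →
    (c (a 0) (a 1) = c (a 2) (a 3) ↔ c (b 0) (b 1) = c (b 2) (b 3))

theorem exists_strictMono_isCanonical {ι α : Type*} [Finite ι] (c : ι → ℕ → ℕ → α) :
    ∃ e : ℕ → ℕ, StrictMono e ∧ ∀ i, IsCanonical fun x y => c i (e x) (e y) :=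
  exists_strictMono_orderInvariant fun i t => c i (t 0) (t 1) = c i (t 2) (t 3)

namespace IsCanonical

variable {α : Type*} {c : ℕ → ℕ → α}

theorem apply_eq_apply_iff (hc : IsCanonical c) {x₀ x₁ x₂ x₃ y₀ y₁ y₂ y₃ : ℕ}
    (h : ((x₀ ≤ x₁ ↔ y₀ ≤ y₁) ∧ (x₀ ≤ x₂ ↔ y₀ ≤ y₂) ∧ (x₀ ≤ x₃ ↔ y₀ ≤ y₃)) ∧
      ((x₁ ≤ x₀ ↔ y₁ ≤ y₀) ∧ (x₁ ≤ x₂ ↔ y₁ ≤ y₂) ∧ (x₁ ≤ x₃ ↔ y₁ ≤ y₃)) ∧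
      ((x₂ ≤ x₀ ↔ y₂ ≤ y₀) ∧ (x₂ ≤ x₁ ↔ y₂ ≤ y₁) ∧ (x₂ ≤ x₃ ↔ y₂ ≤ y₃)) ∧
      ((x₃ ≤ x₀ ↔ y₃ ≤ y₀) ∧ (x₃ ≤ x₁ ↔ y₃ ≤ y₁) ∧ (x₃ ≤ x₂ ↔ y₃ ≤ y₂))) :
    c x₀ x₁ = c x₂ x₃ ↔ c y₀ y₁ = c y₂ y₃ :=
  hc ![x₀, x₁, x₂, x₃] ![y₀, y₁, y₂, y₃] (by simpa [Fin.forall_fin_succ] using h)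

theorem swap (hc : IsCanonical c) : IsCanonical (Function.swap c) := fun a b hab =>
  hc (a ∘ ![1, 0, 3, 2]) (b ∘ ![1, 0, 3, 2]) fun _ _ => hab _ _

theorem double_left_eq (hc : IsCanonical c) {a b x y : ℕ} (hab : a ≠ b) (hax : a ≠ x) (hay : a ≠ y)
    (h : c a b = c x y) : c (2 * a) (2 * b) = c (2 * a + 1) (2 * b) := by
  -- After doubling, `2 * a + 1` compares with `2 * b`, `2 * x` and `2 * y` exactly as `2 * a` does.
  have h₀ : c (2 * a) (2 * b) = c (2 * x) (2 * y) := (hc.apply_eq_apply_iff (by omega)).1 h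
  have h₁ : c (2 * a + 1) (2 * b) = c (2 * x) (2 * y) := (hc.apply_eq_apply_iff (by omega)).1 h
  exact h₀.trans h₁.symm

theorem double_right_eq (hc : IsCanonical c) {a b x y : ℕ} (hab : a ≠ b) (hbx : b ≠ x)
    (hby : b ≠ y) (h : c a b = c x y) : c (2 * a) (2 * b) = c (2 * a) (2 * b + 1) :=
  hc.swap.double_left_eq hab.symm hby hbx h

theorem exists_forall_eq_left (hc : IsCanonical c) {a b b' : ℕ} (hab : a < b) (hb : b < b')
    (h : c a b = c a b') : ∃ U : ℕ → α, ∀ x y, x < y → c x y = U x := by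
  refine ⟨fun x => c x (x + 1), fun x y hxy => ?_⟩
  rcases (Nat.succ_le_of_lt hxy).eq_or_lt with rfl | hlt
  · rfl
  · exact ((hc.apply_eq_apply_iff (by omega)).1 h).symm

theorem exists_forall_eq_right (hc : IsCanonical c) {a a' b : ℕ} (ha : a < a') (hab : a' < b)
    (h : c a b = c a' b) : ∃ U : ℕ → α, ∀ x y, x < y → c x y = U y := by
  refine ⟨fun y => c 0 y, fun x y hxy => ?_⟩
  rcases x.eq_zero_or_pos with rfl | hx
  · rfl
  · exact ((hc.apply_eq_apply_iff (by omega)).1 h).symm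

theorem injOn_nabla_or_exists_forall_eq (hc : IsCanonical c) :
    InjOn (Function.uncurry c) Nabla ∨ (∃ U : ℕ → α, ∀ x y, x < y → c x y = U x) ∨
      ∃ U : ℕ → α, ∀ x y, x < y → c x y = U y := by
  refine or_iff_not_imp_left.2 fun hinj => ?_
  rw [injOn_nabla_iff] at hinj
  push Not at hinj
  obtain ⟨a, b, x, y, hab, hxy, h, hne⟩ := hinj
  rcases lt_trichotomy a x with hax | rfl | hxa
  · exact .inr (hc.exists_forall_eq_right (2 * a).lt_succ_self (by omega)
      (hc.double_left_eq hab.ne hax.ne (hax.trans hxy).ne h))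
  · rcases (hne rfl).lt_or_gt with hby | hyb
    · exact .inl (hc.exists_forall_eq_left hab hby h)
    · exact .inl (hc.exists_forall_eq_left hxy hyb h.symm)
  · exact .inr (hc.exists_forall_eq_right (2 * x).lt_succ_self (by omega)
      (hc.double_left_eq hxy.ne hxa.ne (hxa.trans hab).ne h.symm))

theorem symmetric_or_disjoint_of_injOn_nabla (hc : IsCanonical c)
    (hinj : InjOn (Function.uncurry c) Nabla) :
    (∀ x y, c y x = c x y) ∨ ∀ x y a b, y < x → a < b → c x y ≠ c a b := by
  rw [injOn_nabla_iff] at hinj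
  refine or_iff_not_imp_right.2 fun h => ?_
  push Not at h
  obtain ⟨x, y, a, b, hyx, hab, h⟩ := h
  have ha : a = x ∨ a = y := by
    by_contra! hne
    have := hinj _ _ _ _ (by omega) (by omega) (hc.double_left_eq hab.ne hne.1 hne.2 h.symm)
    omega
  have hb : b = x ∨ b = y := by
    by_contra! hne
    have := hinj _ _ _ _ (by omega) (by omega) (hc.double_right_eq hab.ne hne.1 hne.2 h.symm)
    omega
  obtain ⟨rfl, rfl⟩ : a = y ∧ b = x := by omega
  intro x y
  rcases lt_trichotomy x y with hxy | rfl | hyx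
  · exact (hc.apply_eq_apply_iff (by omega)).1 h
  · rfl
  · exact ((hc.apply_eq_apply_iff (by omega)).1 h).symm

end IsCanonical

section Clone

variable {X : Type*} {C : Set (Ops X)}

/-- A binary function, viewed as a binary operation in `Ops X`; the counterpart of `unaryOp`. -/
def binaryOp (f : X → X → X) : Ops X := ⟨1, fun x => f (x 0) (x 1)⟩

theorem subset_cloneGen (F : Set (Ops X)) : F ⊆ cloneGen F :=
  subset_sInter fun _ hC => hC.2

theorem isClone_cloneGen (F : Set (Ops X)) : IsClone (cloneGen F) :=
  ⟨fun n k _ hC => hC.1.1 n k, fun n m f hf g hg C hC =>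
    hC.1.2 n m f (hf C hC) g fun i => hg i C hC⟩

theorem isClone_Pol2 (H : Set (X → X → X)) : IsClone (Pol2 H) :=
  ⟨fun _ k _ hh => hh k, fun _ _ _ hf g hg h hh =>
    hf (fun i x y => g i fun j => h j x y) fun i => hg i h hh⟩

theorem IsPrecompleteClone.eq_of_subset {D : Set (Ops X)} (hC : IsPrecompleteClone C)
    (hD : IsClone D) (hne : D ≠ Set.univ) (h : C ⊆ D) : C = D := by
  refine h.antisymm fun f hf => by_contra fun hfC => hne (univ_subset_iff.1 ?_)
  rw [← hC.2.2 f hfC]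
  exact sInter_subset_of_mem ⟨hD, insert_subset hf h⟩

namespace IsClone

theorem binaryOp_fst (hC : IsClone C) : binaryOp (fun x _ => x) ∈ C := hC.1 1 0

theorem binaryOp_snd (hC : IsClone C) : binaryOp (fun _ y => y) ∈ C := hC.1 1 1

theorem unary_comp (hC : IsClone C) {F : X → X} (hF : unaryOp F ∈ C) {m : ℕ}
    {f : (Fin (m + 1) → X) → X} (hf : ⟨m, f⟩ ∈ C) : ⟨m, fun x => F (f x)⟩ ∈ C :=
  hC.2 0 m _ hF (fun _ => f) fun _ => hf

theorem binary_comp (hC : IsClone C) {p : X → X → X} (hp : binaryOp p ∈ C) {m : ℕ}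
    {f g : (Fin (m + 1) → X) → X} (hf : ⟨m, f⟩ ∈ C) (hg : ⟨m, g⟩ ∈ C) :
    ⟨m, fun x => p (f x) (g x)⟩ ∈ C :=
  hC.2 1 m _ hp ![f, g] (Fin.forall_fin_two.2 ⟨hf, hg⟩)

theorem binaryOp_comp (hC : IsClone C) {f : Ops X} (hf : f ∈ C) {g : Fin (f.1 + 1) → X → X → X}
    (hg : ∀ i, binaryOp (g i) ∈ C) : binaryOp (fun x y => f.2 fun i => g i x y) ∈ C :=
  hC.2 f.1 1 f.2 hf _ hg

theorem binaryOp_unary_comp (hC : IsClone C) {F : X → X} (hF : unaryOp F ∈ C) {f : X → X → X}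
    (hf : binaryOp f ∈ C) : binaryOp (fun x y => F (f x y)) ∈ C :=
  hC.unary_comp hF hf

theorem binaryOp_binary_comp (hC : IsClone C) {p f g : X → X → X} (hp : binaryOp p ∈ C)
    (hf : binaryOp f ∈ C) (hg : binaryOp g ∈ C) :
    binaryOp (fun x y => p (f x y) (g x y)) ∈ C :=
  hC.binary_comp hp hf hg

theorem binaryOp_swap (hC : IsClone C) {f : X → X → X} (hf : binaryOp f ∈ C) :
    binaryOp (Function.swap f) ∈ C :=
  hC.binaryOp_binary_comp (f := fun _ y => y) hf hC.binaryOp_snd hC.binaryOp_fst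

theorem mem_of_factorsThrough (hC : IsClone C) (hU : ∀ F, unaryOp F ∈ C) {m : ℕ}
    {f q : (Fin (m + 1) → X) → X} (hq : ⟨m, q⟩ ∈ C) (h : f.FactorsThrough q) : ⟨m, f⟩ ∈ C := by
  have hext : f = fun x => Function.extend q f id (q x) :=
    funext fun x => (h.extend_apply id x).symm
  rw [hext]
  exact hC.unary_comp (hU _) hq

theorem binaryOp_mem_of_forall_eq (hC : IsClone C) (hU : ∀ F, unaryOp F ∈ C) {f q : X → X → X}
    (hq : binaryOp q ∈ C) (h : ∀ x y x' y', q x y = q x' y' → f x y = f x' y') :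
    binaryOp f ∈ C :=
  hC.mem_of_factorsThrough hU hq fun _ _ he => h _ _ _ _ he

theorem exists_injective_mem_of_injective2 (hC : IsClone C) {p : X → X → X} (hp : binaryOp p ∈ C)
    (hinj : Function.Injective2 p) (m : ℕ) :
    ∃ q : (Fin (m + 1) → X) → X, ⟨m, q⟩ ∈ C ∧ Function.Injective q := by
  induction m with
  | zero =>
    exact ⟨fun x => x 0, hC.1 0 0, fun x y h => funext <| Fin.forall_fin_one.2 h⟩
  | succ m ih =>
    obtain ⟨q, hq, hqi⟩ := ih
    refine ⟨fun x => p (q (Fin.init x)) (x (Fin.last _)),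
      hC.binary_comp hp (hC.2 m (m + 1) q hq _ fun i => hC.1 (m + 1) i.castSucc) (hC.1 _ _),
      fun x y h => ?_⟩
    obtain ⟨hinit, hlast⟩ := hinj h
    rw [← Fin.snoc_init_self x, ← Fin.snoc_init_self y, hqi hinit, hlast]

theorem eq_univ_of_injective2 (hC : IsClone C) (hU : ∀ F, unaryOp F ∈ C) {p : X → X → X}
    (hp : binaryOp p ∈ C) (hinj : Function.Injective2 p) : C = Set.univ := by
  refine eq_univ_of_forall fun f => ?_
  obtain ⟨q, hq, hqi⟩ := hC.exists_injective_mem_of_injective2 hp hinj f.1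
  exact hC.mem_of_factorsThrough hU hq (hqi.factorsThrough f.2)

end IsClone

end Clone

section NeverOneOne

theorem not_injOn_nabla_of_forall_apply_le {c : ℕ → ℕ → ℕ} {x B : ℕ}
    (h : ∀ y, x < y → c x y ≤ B) : ¬ InjOn (Function.uncurry c) Nabla := fun hinj =>
  infinite_of_injOn_mapsTo (f := c x) (s := Ioi x) (t := Iic B)
    (fun y hy y' hy' he => (injOn_nabla_iff.1 hinj x y x y' hy hy' he).2) h (Ioi_infinite x)
    (finite_Iic B)

theorem injOn_nabla_comp_strictMono {α : Type*} {g : ℕ → ℕ → α}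
    (hg : InjOn (Function.uncurry g) Nabla) {e : ℕ → ℕ} (he : StrictMono e) :
    InjOn (fun p : ℕ × ℕ => g (e p.1) (e p.2)) Nabla :=
  hg.comp (he.injective.prodMap he.injective).injOn fun _ hp => he hp

namespace EssUnary2

variable {u a b : ℕ → ℕ → ℕ}

theorem left (U : ℕ → ℕ) : EssUnary2 fun x _ => U x := .inl ⟨U, fun _ _ => rfl⟩

theorem right (U : ℕ → ℕ) : EssUnary2 fun _ y => U y := .inr ⟨U, fun _ _ => rfl⟩

theorem unary_comp (hu : EssUnary2 u) (F : ℕ → ℕ) : EssUnary2 fun x y => F (u x y) :=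
  hu.imp (fun ⟨U, hU⟩ => ⟨F ∘ U, fun x y => congrArg F (hU x y)⟩)
    fun ⟨U, hU⟩ => ⟨F ∘ U, fun x y => congrArg F (hU x y)⟩

theorem comp (hu : EssUnary2 u) (ha : EssUnary2 a) (hb : EssUnary2 b) :
    EssUnary2 fun x y => u (a x y) (b x y) := by
  obtain ⟨U, hU⟩ | ⟨U, hU⟩ := hu
  · simpa only [hU] using ha.unary_comp U
  · simpa only [hU] using hb.unary_comp U

theorem not_injOn_nabla (hu : EssUnary2 u) : ¬ InjOn (Function.uncurry u) Nabla := by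
  obtain ⟨U, hU⟩ | ⟨U, hU⟩ := hu
  · exact not_injOn_nabla_of_forall_apply_le (x := 0) fun y _ => (hU 0 y).le
  · intro hinj
    have h := injOn_nabla_iff.1 hinj 0 2 1 2 two_pos one_lt_two ((hU 0 2).trans (hU 1 2).symm)
    exact zero_ne_one h.1

theorem mem_T2bin (hu : EssUnary2 u) : u ∈ T2bin := fun _ _ ha hb =>
  (hu.comp ha hb).not_injOn_nabla

theorem binaryOp_mem {C : Set (Ops ℕ)} (hu : EssUnary2 u) (hC : IsClone C)
    (hU : ∀ F, unaryOp F ∈ C) : binaryOp u ∈ C := by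
  obtain ⟨U, hu⟩ | ⟨U, hu⟩ := hu
  · exact hC.binaryOp_mem_of_forall_eq hU hC.binaryOp_fst fun x y x' y' h => by rw [hu, hu, h]
  · exact hC.binaryOp_mem_of_forall_eq hU hC.binaryOp_snd fun x y x' y' h => by rw [hu, hu, h]

end EssUnary2

theorem exists_essUnary2_eq {ι : Type*} [Finite ι] {c : ι → ℕ → ℕ → ℕ}
    (hc : ∀ i (e : ℕ → ℕ), StrictMono e →
      ¬ InjOn (Function.uncurry fun x y => c i (e x) (e y)) Nabla) :
    ∃ e : ℕ → ℕ, StrictMono e ∧ ∃ u : ι → ℕ → ℕ → ℕ, (∀ i, EssUnary2 (u i)) ∧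
      ∀ i x y, x < y → c i (e x) (e y) = u i x y := by
  obtain ⟨e, he, hcan⟩ := exists_strictMono_isCanonical c
  have hu : ∀ i, ∃ u, EssUnary2 u ∧ ∀ x y, x < y → c i (e x) (e y) = u x y := fun i => by
    obtain hinj | ⟨U, hU⟩ | ⟨U, hU⟩ := (hcan i).injOn_nabla_or_exists_forall_eq
    · exact absurd hinj (hc i e he)
    · exact ⟨_, .left U, hU⟩
    · exact ⟨_, .right U, hU⟩
  choose u hu hcu using hu
  exact ⟨e, he, u, hu, hcu⟩

theorem isClone_neverOneOneOp : IsClone {f : Ops ℕ | NeverOneOneOp f} := by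
  refine ⟨fun n k u hu => (hu k).not_injOn_nabla, fun n m f hf g hg u hu hinj => ?_⟩
  obtain ⟨e, he, v, hv, hgv⟩ := exists_essUnary2_eq (c := fun i x y => g i fun j => u j x y)
    fun i e _ => hg i (fun j x y => u j (e x) (e y)) fun j =>
      (hu j).comp (EssUnary2.left e) (EssUnary2.right e)
  have hinj' := injOn_nabla_comp_strictMono (g := fun x y => f fun i => g i fun j => u j x y)
    hinj he
  refine hf v hv (hinj'.congr fun p hp => ?_)
  exact congrArg f (funext fun i => hgv i p.1 p.2 hp)

theorem neverOneOneOp_binaryOp_iff {f : ℕ → ℕ → ℕ} :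
    NeverOneOneOp (binaryOp f) ↔ f ∈ T2bin :=
  ⟨fun h u v hu hv => h ![u, v] (Fin.forall_fin_two.2 ⟨hu, hv⟩),
    fun h u hu => h (u 0) (u 1) (hu 0) (hu 1)⟩

theorem setOf_neverOneOneOp_eq_Pol2 : {f : Ops ℕ | NeverOneOneOp f} = Pol2 T2bin := by
  ext f
  refine ⟨fun hf g hg => ?_, fun hf u hu => ?_⟩
  · exact neverOneOneOp_binaryOp_iff.1 (isClone_neverOneOneOp.binaryOp_comp hf fun i =>
      neverOneOneOp_binaryOp_iff.2 (hg i))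
  · exact hf u (fun i => (hu i).mem_T2bin) _ _ (.left id) (.right id)

theorem mem_Pol2_T2bin_iff {f : Ops ℕ} : f ∈ Pol2 T2bin ↔ NeverOneOneOp f :=
  (Set.ext_iff.1 setOf_neverOneOneOp_eq_Pol2 f).symm

theorem binaryOp_mem_Pol2_T2bin_iff {f : ℕ → ℕ → ℕ} : binaryOp f ∈ Pol2 T2bin ↔ f ∈ T2bin :=
  mem_Pol2_T2bin_iff.trans neverOneOneOp_binaryOp_iff

theorem comp_mem_T2bin {f g h : ℕ → ℕ → ℕ} (hf : f ∈ T2bin) (hg : g ∈ T2bin) (hh : h ∈ T2bin) :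
    (fun x y => f (g x y) (h x y)) ∈ T2bin :=
  binaryOp_mem_Pol2_T2bin_iff.2 hf ![g, h] (Fin.forall_fin_two.2 ⟨hg, hh⟩)

theorem unaryOp_mem_Pol2_T2bin (F : ℕ → ℕ) : unaryOp F ∈ Pol2 T2bin :=
  mem_Pol2_T2bin_iff.2 fun _ hu => ((hu 0).unary_comp F).not_injOn_nabla

theorem Pol2_T2bin_ne_univ : Pol2 T2bin ≠ Set.univ := fun h =>
  binaryOp_mem_Pol2_T2bin_iff.1 (h ▸ mem_univ (binaryOp Nat.pair)) _ _ (.left id) (.right id)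
    Nat.pairEquiv.injective.injOn

theorem mem_T2bin_of_comm {f : ℕ → ℕ → ℕ} (hcomm : ∀ x y, f x y = f y x)
    (h : ∀ U V : ℕ → ℕ, ¬ InjOn (Function.uncurry fun x y => f (U x) (V y)) Nabla) :
    f ∈ T2bin := by
  rintro u v (⟨U, hU⟩ | ⟨U, hU⟩) (⟨V, hV⟩ | ⟨V, hV⟩) <;> simp only [hU, hV]
  · exact (EssUnary2.left fun x => f (U x) (V x)).not_injOn_nabla
  · exact h U V
  · simp only [hcomm (U _)]
    exact h V U
  · exact (EssUnary2.right fun y => f (U y) (V y)).not_injOn_nabla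

theorem max_mem_T2bin : max ∈ T2bin := by
  refine mem_T2bin_of_comm max_comm fun U V hinj => ?_
  by_cases hV : ∀ y, 1 < y → V y ≤ max (U 0) (U 1)
  · exact absurd hinj (not_injOn_nabla_of_forall_apply_le fun y hy =>
      max_le (le_max_right _ _) (hV y hy))
  · push Not at hV
    obtain ⟨y, hy, hVy⟩ := hV
    obtain ⟨h0, h1⟩ := max_lt_iff.1 hVy
    have heq : max (U 0) (V y) = max (U 1) (V y) := by
      rw [max_eq_right h0.le, max_eq_right h1.le]
    exact zero_ne_one (injOn_nabla_iff.1 hinj 0 y 1 y (zero_lt_one.trans hy) hy heq).1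

theorem min_mem_T2bin : min ∈ T2bin :=
  mem_T2bin_of_comm min_comm fun U _ =>
    not_injOn_nabla_of_forall_apply_le (x := 0) (B := U 0) fun _ _ => min_le_left _ _

theorem lt_indicator_mem_T2bin : (fun x y => if x < y then 1 else 0) ∈ T2bin := fun u v _ _ =>
  not_injOn_nabla_of_forall_apply_le (c := fun x y => if u x y < v x y then 1 else 0) (x := 0)
    (B := 1) fun y _ => by split_ifs <;> decide

theorem exists_binaryOp_mem_injOn_nabla {C : Set (Ops ℕ)} (hC : IsClone C)
    (hU : ∀ F, unaryOp F ∈ C) (h : ¬ C ⊆ Pol2 T2bin) :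
    ∃ g, binaryOp g ∈ C ∧ InjOn (Function.uncurry g) Nabla := by
  obtain ⟨f, hf, hfT⟩ := not_subset.1 h
  rw [mem_Pol2_T2bin_iff, NeverOneOneOp] at hfT
  push Not at hfT
  obtain ⟨u, hu, hinj⟩ := hfT
  exact ⟨_, hC.binaryOp_comp hf fun i => (hu i).binaryOp_mem hC hU, hinj⟩

theorem injective2_of_injOn_nabla {g : ℕ → ℕ → ℕ} (hg : InjOn (Function.uncurry g) Nabla) :
    Function.Injective2 fun x y =>
      g (if x < y then 1 else 0) (g (min x y) (max x y + 1) + 2) := by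
  rw [injOn_nabla_iff] at hg
  intro x x' y y' h
  obtain ⟨hlt, hmm⟩ := hg _ _ _ _ (by split_ifs <;> omega) (by split_ifs <;> omega) h
  obtain ⟨hmin, hmax⟩ := hg _ _ _ _ (by omega) (by omega) (Nat.add_right_cancel hmm)
  split_ifs at hlt <;> omega

theorem eq_univ_of_Pol2_T2bin_ssubset {C : Set (Ops ℕ)} (hC : IsClone C) (h : Pol2 T2bin ⊂ C) :
    C = Set.univ := by
  have hU : ∀ F, unaryOp F ∈ C := fun F => h.1 (unaryOp_mem_Pol2_T2bin F)
  have hT : ∀ {f}, f ∈ T2bin → binaryOp f ∈ C := fun hf => h.1 (binaryOp_mem_Pol2_T2bin_iff.2 hf)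
  obtain ⟨g, hg, hinj⟩ := exists_binaryOp_mem_injOn_nabla hC hU h.2
  have hpair : binaryOp (fun x y => g (min x y) (max x y + 1) + 2) ∈ C :=
    hC.binaryOp_unary_comp (hU (· + 2)) <| hC.binaryOp_binary_comp hg (hT min_mem_T2bin) <|
      hC.binaryOp_unary_comp (hU (· + 1)) (hT max_mem_T2bin)
  exact hC.eq_univ_of_injective2 hU
    (hC.binaryOp_binary_comp hg (hT lt_indicator_mem_T2bin) hpair) (injective2_of_injOn_nabla hinj)

theorem isPrecompleteClone_Pol2_T2bin : IsPrecompleteClone (Pol2 T2bin) := by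
  refine ⟨isClone_Pol2 _, Pol2_T2bin_ne_univ, fun f hf => ?_⟩
  have hins := subset_cloneGen (insert f (Pol2 T2bin))
  exact eq_univ_of_Pol2_T2bin_ssubset (isClone_cloneGen _)
    ⟨(subset_insert _ _).trans hins, fun h => hf (h (hins (mem_insert _ _)))⟩

end NeverOneOne

section AlmostUnary

/-- A pairing function for the pairs with `x ≤ y`, which together with the unary operations
generates `T1`. Its junk value below the diagonal is `0`; the shift by one keeps `0` from being the
code of a pair. -/
def upperPair (x y : ℕ) : ℕ := if x ≤ y then Nat.pair x y + 1 else 0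

theorem upperPair_of_le {x y : ℕ} (h : x ≤ y) : upperPair x y = Nat.pair x y + 1 := if_pos h

theorem upperPair_inj {x y x' y' : ℕ} (h : x ≤ y) (h' : x' ≤ y') :
    upperPair x y = upperPair x' y' ↔ x = x' ∧ y = y' := by
  rw [upperPair_of_le h, upperPair_of_le h', Nat.add_right_cancel_iff, Nat.pair_eq_pair]

theorem lt_upperPair {x y : ℕ} (h : x ≤ y) : y < upperPair x y := by
  rw [upperPair_of_le h]
  exact Nat.lt_succ_of_le (Nat.right_le_pair x y)

theorem upperPair_upperPair_inj {a b n a' b' n' : ℕ} (ha : a ≤ n) (hb : b ≤ n) (ha' : a' ≤ n')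
    (hb' : b' ≤ n') (h : upperPair a (upperPair b n) = upperPair a' (upperPair b' n')) :
    a = a' ∧ b = b' := by
  obtain ⟨haa, hbb⟩ := (upperPair_inj (ha.trans (lt_upperPair hb).le)
    (ha'.trans (lt_upperPair hb').le)).1 h
  exact ⟨haa, ((upperPair_inj hb hb').1 hbb).1⟩

theorem notMem_T1bin_iff {f : ℕ → ℕ → ℕ} :
    f ∉ T1bin ↔ (∃ x, ∀ n, ∃ y, n < f x y) ∧ ∃ y, ∀ n, ∃ x, n < f x y := by
  have hrow (f : ℕ → ℕ → ℕ) :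
      (∃ F : ℕ → ℕ, ∀ x y, f x y ≤ F x) ↔ ∀ x, ∃ n, ∀ y, f x y ≤ n :=
    (Classical.skolem (p := fun x n => ∀ y, f x y ≤ n)).symm
  have hmem : f ∈ T1bin ↔ (∀ x, ∃ n, ∀ y, f x y ≤ n) ∨ ∀ y, ∃ n, ∀ x, f x y ≤ n :=
    or_congr (hrow f) ((exists_congr fun _ => forall_comm).trans (hrow (Function.swap f)))
  rw [hmem]
  push Not
  rfl

theorem exists_forall_le_of_notMem_T1bin {f : ℕ → ℕ → ℕ} (hf : f ∉ T1bin) :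
    ∃ t₁ ∈ T1bin, ∃ t₂ ∈ T1bin, ∀ x y, max x y ≤ f (t₁ x y) (t₂ x y) := by
  obtain ⟨⟨x₀, hx₀⟩, y₀, hy₀⟩ := notMem_T1bin_iff.1 hf
  choose ψ hψ using hx₀
  choose φ hφ using hy₀
  refine ⟨fun x y => if x ≤ y then x₀ else φ x, .inl ⟨fun x => max x₀ (φ x), fun x y => ?_⟩,
    fun x y => if x ≤ y then ψ y else y₀, .inr ⟨fun y => max (ψ y) y₀, fun x y => ?_⟩,
    fun x y => ?_⟩ <;> dsimp only
  · split_ifs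
    exacts [le_max_left _ _, le_max_right _ _]
  · split_ifs
    exacts [le_max_left _ _, le_max_right _ _]
  · split_ifs with hxy
    · exact (max_eq_right hxy).trans_le (hψ y).le
    · exact (max_eq_left (not_le.1 hxy).le).trans_le (hφ x).le

theorem natPair_notMem_T1bin : Nat.pair ∉ T1bin :=
  notMem_T1bin_iff.2 ⟨⟨0, fun n => ⟨n + 1, Nat.right_le_pair 0 (n + 1)⟩⟩,
    0, fun n => ⟨n + 1, Nat.left_le_pair (n + 1) 0⟩⟩

theorem Pol2_T1bin_ne_univ : Pol2 T1bin ≠ Set.univ := fun h =>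
  natPair_notMem_T1bin <| (h ▸ mem_univ (binaryOp Nat.pair) : binaryOp Nat.pair ∈ Pol2 T1bin)
    ![fun x _ => x, fun _ y => y]
    (Fin.forall_fin_two.2 ⟨.inl ⟨id, fun _ _ => le_rfl⟩, .inr ⟨id, fun _ _ => le_rfl⟩⟩)

variable {C : Set (Ops ℕ)}

theorem injective2_of_symmetric_of_injOn_nabla {α : Type*} {g : ℕ → ℕ → α}
    (hsymm : ∀ x y, g y x = g x y) (hinj : InjOn (Function.uncurry g) Nabla) :
    Function.Injective2 fun x y => g (2 * x) (2 * y + 1) := by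
  have hminmax : ∀ a b, g (min a b) (max a b) = g a b := fun a b => by
    rcases le_total a b with hab | hba
    · rw [min_eq_left hab, max_eq_right hab]
    · rw [min_eq_right hba, max_eq_left hba, hsymm]
  intro x x' y y' h
  dsimp only at h
  rw [← hminmax (2 * x), ← hminmax (2 * x')] at h
  have := injOn_nabla_iff.1 hinj _ _ _ _ (by omega) (by omega) h
  omega

theorem upperPair_eq_of_disjoint_of_injOn_nabla {α : Type*} {g : ℕ → ℕ → α}
    (hdisj : ∀ x y a b, y < x → a < b → g x y ≠ g a b)
    (hinj : InjOn (Function.uncurry g) Nabla) {x y x' y' : ℕ}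
    (h : g (2 * x) (2 * y + 1) = g (2 * x') (2 * y' + 1)) : upperPair x y = upperPair x' y' := by
  rcases le_or_gt x y with hxy | hyx <;> rcases le_or_gt x' y' with hxy' | hyx'
  · have := injOn_nabla_iff.1 hinj _ _ _ _ (by omega) (by omega) h
    exact (upperPair_inj hxy hxy').2 (by omega)
  · exact absurd h.symm (hdisj _ _ _ _ (by omega) (by omega))
  · exact absurd h (hdisj _ _ _ _ (by omega) (by omega))
  · exact (if_neg hyx.not_ge).trans (if_neg hyx'.not_ge).symm

theorem eq_univ_or_binaryOp_upperPair_mem (hC : IsClone C) (hU : ∀ F, unaryOp F ∈ C)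
    {g : ℕ → ℕ → ℕ} (hg : binaryOp g ∈ C) (hcan : IsCanonical g)
    (hinj : InjOn (Function.uncurry g) Nabla) : C = Set.univ ∨ binaryOp upperPair ∈ C := by
  -- Even first and odd second arguments avoid the diagonal and tell the two coordinates apart.
  have hg' : binaryOp (fun x y => g (2 * x) (2 * y + 1)) ∈ C :=
    hC.binaryOp_binary_comp hg (hC.binaryOp_unary_comp (hU (2 * ·)) hC.binaryOp_fst)
      (hC.binaryOp_unary_comp (hU (2 * · + 1)) hC.binaryOp_snd)
  refine (hcan.symmetric_or_disjoint_of_injOn_nabla hinj).imp (fun hsymm => ?_) fun hdisj => ?_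
  · exact hC.eq_univ_of_injective2 hU hg' (injective2_of_symmetric_of_injOn_nabla hsymm hinj)
  · exact hC.binaryOp_mem_of_forall_eq hU hg' fun _ _ _ _ =>
      upperPair_eq_of_disjoint_of_injOn_nabla hdisj hinj

theorem binaryOp_ite_le_mem (hC : IsClone C) (hU : ∀ F, unaryOp F ∈ C)
    (hp : binaryOp upperPair ∈ C) (s : ℕ → ℕ → ℕ) :
    binaryOp (fun x y => if x ≤ y then s x y else 0) ∈ C := by
  refine hC.binaryOp_mem_of_forall_eq hU hp fun x y x' y' h => ?_
  unfold upperPair at h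
  split_ifs at h with hxy hxy' hxy'
  · obtain ⟨rfl, rfl⟩ := Nat.pair_eq_pair.1 (Nat.add_right_cancel h)
    rfl
  · rw [if_neg hxy, if_neg hxy']

theorem binaryOp_mem_of_forall_le_right (hC : IsClone C) (hU : ∀ F, unaryOp F ∈ C)
    (hp : binaryOp upperPair ∈ C) {t : ℕ → ℕ → ℕ} {F : ℕ → ℕ} (ht : ∀ x y, t x y ≤ F y) :
    binaryOp t ∈ C := by
  -- `t` is recovered from its increments below and above the diagonal, each of which factors
  -- through `upperPair`, and both are at most `F y + 1`.
  let tLower : ℕ → ℕ → ℕ := fun x y => if y ≤ x then t x y + 1 else 0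
  let tUpper : ℕ → ℕ → ℕ := fun x y => if x ≤ y then t x y + 1 else 0
  have hlower : binaryOp tLower ∈ C :=
    hC.binaryOp_swap (binaryOp_ite_le_mem hC hU hp fun x y => t y x + 1)
  have hupper : binaryOp tUpper ∈ C := binaryOp_ite_le_mem hC hU hp fun x y => t x y + 1
  have htriple : binaryOp (fun x y => upperPair (tLower x y) (upperPair (tUpper x y) (F y + 1)))
      ∈ C :=
    hC.binaryOp_binary_comp hp hlower <| hC.binaryOp_binary_comp hp hupper <|
      hC.binaryOp_unary_comp (hU (F · + 1)) hC.binaryOp_snd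
  have htL : ∀ x y, tLower x y ≤ F y + 1 := fun x y => by grind
  have htU : ∀ x y, tUpper x y ≤ F y + 1 := fun x y => by grind
  refine hC.binaryOp_mem_of_forall_eq hU htriple fun x y x' y' h => ?_
  obtain ⟨hl, hu⟩ := upperPair_upperPair_inj (htL x y) (htU x y) (htL x' y') (htU x' y') h
  grind

theorem binaryOp_mem_of_mem_T1bin (hC : IsClone C) (hU : ∀ F, unaryOp F ∈ C)
    (hp : binaryOp upperPair ∈ C) {t : ℕ → ℕ → ℕ} (ht : t ∈ T1bin) : binaryOp t ∈ C := by
  obtain ⟨F, hF⟩ | ⟨F, hF⟩ := ht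
  · exact hC.binaryOp_swap (f := Function.swap t)
      (binaryOp_mem_of_forall_le_right hC hU hp fun x y => hF y x)
  · exact binaryOp_mem_of_forall_le_right hC hU hp hF

theorem eq_univ_of_upperPair_mem (hC : IsClone C) (hU : ∀ F, unaryOp F ∈ C)
    (hp : binaryOp upperPair ∈ C) (h : ¬ C ⊆ Pol2 T1bin) : C = Set.univ := by
  obtain ⟨f, hf, hfT⟩ := not_subset.1 h
  simp only [Pol2, mem_ofPred_eq, not_forall] at hfT
  obtain ⟨g, hg, hfg⟩ := hfT
  obtain ⟨t₁, ht₁, t₂, ht₂, hle⟩ := exists_forall_le_of_notMem_T1bin hfg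
  have hT : ∀ {t}, t ∈ T1bin → binaryOp t ∈ C := binaryOp_mem_of_mem_T1bin hC hU hp
  set m : ℕ → ℕ → ℕ := fun x y => f.2 fun i => g i (t₁ x y) (t₂ x y)
  have hm : binaryOp m ∈ C :=
    hC.binaryOp_binary_comp (hC.binaryOp_comp hf fun i => hT (hg i)) (hT ht₁) (hT ht₂)
  have hpm : binaryOp (fun x y => upperPair x (upperPair y (m x y))) ∈ C :=
    hC.binaryOp_binary_comp hp hC.binaryOp_fst (hC.binaryOp_binary_comp hp hC.binaryOp_snd hm)
  refine hC.eq_univ_of_injective2 hU hpm fun x x' y y' h => ?_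
  exact upperPair_upperPair_inj (le_of_max_le_left (hle x y)) (le_of_max_le_right (hle x y))
    (le_of_max_le_left (hle x' y')) (le_of_max_le_right (hle x' y')) h

theorem subset_Pol2_T1bin_or_subset_Pol2_T2bin (hC : IsClone C) (hU : ∀ F, unaryOp F ∈ C)
    (hne : C ≠ Set.univ) : C ⊆ Pol2 T1bin ∨ C ⊆ Pol2 T2bin := by
  refine or_iff_not_imp_right.2 fun h => by_contra fun h₁ => hne ?_
  obtain ⟨g, hg, hinj⟩ := exists_binaryOp_mem_injOn_nabla hC hU h
  obtain ⟨e, he, hcan⟩ := exists_strictMono_isCanonical fun _ : Unit => g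
  have hge : binaryOp (fun x y => g (e x) (e y)) ∈ C :=
    hC.binaryOp_binary_comp hg (hC.binaryOp_unary_comp (hU e) hC.binaryOp_fst)
      (hC.binaryOp_unary_comp (hU e) hC.binaryOp_snd)
  exact (eq_univ_or_binaryOp_upperPair_mem hC hU hge (hcan ())
    (injOn_nabla_comp_strictMono hinj he)).elim id
    fun hp => eq_univ_of_upperPair_mem hC hU hp h₁

end AlmostUnary

/-- **Gavrilov; Goldstern–Shelah** (case `X = ℕ`): `T2` is closed under composition, the
never 1-1 operations form the clone `Pol(T2)`, `Pol(T2)` is precomplete, and `Pol(T1)`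
and `Pol(T2)` are the only precomplete clones containing all unary operations. -/
theorem stmt7 :
    (∀ f g h : ℕ → ℕ → ℕ, f ∈ T2bin → g ∈ T2bin → h ∈ T2bin →
      (fun x y => f (g x y) (h x y)) ∈ T2bin) ∧
    (IsClone {f : Ops ℕ | NeverOneOneOp f} ∧
      {f : Ops ℕ | NeverOneOneOp f} = Pol2 T2bin) ∧
    IsPrecompleteClone (Pol2 T2bin) ∧
    (∀ C : Set (Ops ℕ), IsPrecompleteClone C → (∀ F : ℕ → ℕ, unaryOp F ∈ C) →
      C = Pol2 T1bin ∨ C = Pol2 T2bin) := by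
  refine ⟨fun f g h => comp_mem_T2bin, ⟨isClone_neverOneOneOp, setOf_neverOneOneOp_eq_Pol2⟩,
    isPrecompleteClone_Pol2_T2bin, fun C hC hU => ?_⟩
  exact (subset_Pol2_T1bin_or_subset_Pol2_T2bin hC.1 hU hC.2.1).imp
    (hC.eq_of_subset (isClone_Pol2 _) Pol2_T1bin_ne_univ)
    (hC.eq_of_subset (isClone_Pol2 _) Pol2_T2bin_ne_univ)
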